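/- Let x and y be two distinct points of the Hilbert cube Q and let S ⊆ Q be a set with x, y ∈ Q \ S such that S intersects every continuum containing both x and y. Then S (with the subspace topology) is strongly infinite dimensional. -/

import Mathlib

open Set

/-- A separator between `A` and `B` in a topological space: a closed set `L` whose
complement is the union of two disjoint open sets containing `A` and `B` respectively. -/
def IsSeparator {X : Type*} [TopologicalSpace X] (A B L : Set X) : Prop :=
  IsClosed L ∧ ∃ U V : Set X, IsOpen U ∧ IsOpen V ∧ Disjoint U V ∧
    A ⊆ U ∧ B ⊆ V ∧ Lᶜ = U ∪ V

/-- A family of pairs of sets is essential if every choice of separators has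
nonempty intersection. -/
def IsEssentialFamily {X : Type*} [TopologicalSpace X] {Γ : Type*}
    (A B : Γ → Set X) : Prop :=
  ∀ L : Γ → Set X, (∀ i, IsSeparator (A i) (B i) (L i)) → (⋂ i, L i).Nonempty

/-- A space is strongly infinite dimensional if it admits a countably infinite
essential family of pairs of disjoint closed subsets. -/
def StronglyInfiniteDimensional (X : Type*) [TopologicalSpace X] : Prop :=
  ∃ A B : ℕ → Set X,
    (∀ n, IsClosed (A n) ∧ IsClosed (B n) ∧ Disjoint (A n) (B n)) ∧
    IsEssentialFamily A B

/-- The Hilbert cube `Q = [-1,1]^ℕ`. -/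
abbrev HilbertCube : Type := ℕ → Set.Icc (-1 : ℝ) 1

/-- The negative face `W_i^- = {x ∈ Q : x_i = -1}`. -/
def negFace (i : ℕ) : Set HilbertCube := {x | (x i : ℝ) = -1}

/-- The positive face `W_i^+ = {x ∈ Q : x_i = 1}`. -/
def posFace (i : ℕ) : Set HilbertCube := {x | (x i : ℝ) = 1}

/-!
The pairs of opposite faces of the Hilbert cube form an essential family: on a fine grid, the
coboundaries modulo two of the indicator functions of the negative sides of finitely many
separators have a cup product whose sum over the grid is `1`, so some small cell meets both sides
of each of these separators, and such cells accumulate at a common point of all separators.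
Consequently separators for all pairs of faces but the `k`-th contain a common continuum joining
the two `k`-th faces.

If `x k ≠ y k`, there is a map `f` of the cube to itself that collapses the `k`-th faces to `x` and
`y` and is injective elsewhere. The images under `f` of the other pairs of faces, slightly
thickened, trace an essential family on `S`: separators in `S` pull back along `f` and extend to
the whole cube, a continuum in the extensions joins the `k`-th faces, and its image contains `x`
and `y`, hence meets `S`.
-/

section Grid

variable {ι : Type*}

/-- The vertices of the grid cell with least vertex `v` and unit edges in the directions of `J`.
The pair `(J, v)` encodes the cell; its dimension is the cardinality of `J`. -/
def gridCell (J : Finset ι) (v : ι →₀ ℕ) : Set (ι →₀ ℕ) :=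
  Icc v (v + ∑ j ∈ J, Finsupp.single j 1)

/-- The least vertices of the unit cells that tile the cube `[0, N]^J`. -/
noncomputable def gridBox (N : ℕ) (J : Finset ι) : Finset (ι →₀ ℕ) :=
  J.finsupp fun _ => Finset.range N

variable {J : Finset ι} {v w : ι →₀ ℕ} {i j : ι} {N : ℕ}

lemma apply_eq_of_mem_gridCell (hw : w ∈ gridCell J v) (hi : i ∉ J) : w i = v i := by
  classical
  have hle := hw.2 i
  simp only [Finsupp.add_apply, Finsupp.finsetSum_apply, Finsupp.single_apply,
    Finset.sum_ite_eq', if_neg hi] at hle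
  exact le_antisymm hle (hw.1 i)

lemma apply_le_add_one_of_mem_gridCell (hw : w ∈ gridCell J v) (i : ι) : w i ≤ v i + 1 := by
  classical
  have hle := hw.2 i
  simp only [Finsupp.add_apply, Finsupp.finsetSum_apply, Finsupp.single_apply,
    Finset.sum_ite_eq'] at hle
  split_ifs at hle <;> omega

lemma mem_gridBox : v ∈ gridBox N J ↔ (∀ i ∈ J, v i < N) ∧ ∀ i ∉ J, v i = 0 := by
  simp only [gridBox, Finset.mem_finsupp_iff, Finset.mem_range, Finset.subset_iff,
    Finsupp.mem_support_iff]
  grind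

lemma sum_gridBox_add_single {M : Type*} [AddCommMonoid M] (hj : j ∈ J) {g : (ι →₀ ℕ) → M}
    (hg : ∀ v, v j = N → g v = 0) :
    ∑ v ∈ gridBox N J, g (v + Finsupp.single j 1) = ∑ v ∈ gridBox N J with v j ≠ 0, g v := by
  classical
  refine Finset.sum_bij_ne_zero (fun v _ _ => v + Finsupp.single j 1) ?_ ?_ ?_ fun _ _ _ => rfl
  · intro v hv hgv
    have hvj : v j + 1 ≠ N := fun h => hgv (hg _ (by simpa using h))
    rw [mem_gridBox] at hv
    simp only [Finset.mem_filter, mem_gridBox, Finsupp.add_apply, Finsupp.single_apply]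
    grind
  · intro v _ _ w _ _ hvw
    exact add_right_cancel hvw
  · intro w hw hgw
    simp only [Finset.mem_filter, mem_gridBox] at hw
    have hsub : w - Finsupp.single j 1 + Finsupp.single j 1 = w :=
      tsub_add_cancel_of_le (Finsupp.single_le_iff.2 (Nat.one_le_iff_ne_zero.2 hw.2))
    refine ⟨w - Finsupp.single j 1, ?_, by rwa [hsub], hsub⟩
    simp only [mem_gridBox, Finsupp.tsub_apply]
    grind

variable [DecidableEq ι]

lemma gridCell_erase_subset (J : Finset ι) (v : ι →₀ ℕ) (j : ι) :
    gridCell (J.erase j) v ⊆ gridCell J v :=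
  Icc_subset_Icc_right (add_le_add_right
    (Finset.sum_le_sum_of_subset (J.erase_subset j)) v)

lemma gridCell_erase_add_single_subset (hj : j ∈ J) (v : ι →₀ ℕ) :
    gridCell (J.erase j) (v + Finsupp.single j 1) ⊆ gridCell J v := by
  rw [gridCell, gridCell, add_assoc, J.add_sum_erase (fun j => Finsupp.single j 1) hj]
  exact Icc_subset_Icc_left le_self_add

lemma gridBox_erase (hN : 0 < N) (J : Finset ι) (j : ι) :
    gridBox N (J.erase j) = {v ∈ gridBox N J | v j = 0} := by
  ext v
  simp only [Finset.mem_filter, mem_gridBox, Finset.mem_erase]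
  grind

lemma sum_gridBox_add_single_add (hN : 0 < N) (hj : j ∈ J) {g : (ι →₀ ℕ) → ZMod 2}
    (hg : ∀ v, v j = N → g v = 0) :
    ∑ v ∈ gridBox N J, (g (v + Finsupp.single j 1) + g v) = ∑ v ∈ gridBox N (J.erase j), g v := by
  rw [Finset.sum_add_distrib, sum_gridBox_add_single hj hg, gridBox_erase hN J j,
    ← Finset.sum_filter_add_sum_filter_not (gridBox N J) (fun v => v j = 0), add_left_comm,
    CharTwo.add_self_eq_zero, add_zero]

end Grid

section CubicalCochain

variable {ι : Type*} [DecidableEq ι]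

/-- Cubical cochains modulo two on the grid `ι →₀ ℕ`, in all degrees at once: a value for each
cell `(J, v)`, in the encoding of `gridCell`. -/
abbrev CubicalCochain (ι : Type*) : Type _ := Finset ι → (ι →₀ ℕ) → ZMod 2

/-- The coboundary of a cubical cochain: its sum over the codimension one faces of a cell. -/
noncomputable def CubicalCochain.coboundary (ω : CubicalCochain ι) : CubicalCochain ι := fun J v =>
  ∑ j ∈ J, (ω (J.erase j) (v + Finsupp.single j 1) + ω (J.erase j) v)

/-- The cup product `δa₁ ⌣ ⋯ ⌣ δaₙ` of the coboundaries of the functions `a i`, `i ∈ l`, built as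
`δ(a₁ · (δa₂ ⌣ ⋯ ⌣ δaₙ))`. -/
noncomputable def coboundaryProduct (a : ι → (ι →₀ ℕ) → ZMod 2) :
    List ι → CubicalCochain ι
  | [] => fun _ _ => 1
  | i :: l => CubicalCochain.coboundary fun J v => a i v * coboundaryProduct a l J v

lemma sum_sum_erase_eq_zero_of_symm {M : Type*} [AddCommMonoid M] (hM : ∀ m : M, m + m = 0)
    (J : Finset ι) {F : ι → ι → M} (hF : ∀ j l, F j l = F l j) :
    ∑ j ∈ J, ∑ l ∈ J.erase j, F j l = 0 := by
  rw [Finset.sum_sigma']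
  refine Finset.sum_involution (fun p _ => ⟨p.2, p.1⟩) ?_ ?_ ?_ fun _ _ => rfl
  · rintro ⟨j, l⟩ -
    exact (congrArg (F j l + ·) (hF l j)).trans (hM _)
  · rintro ⟨j, l⟩ hjl - hswap
    simp only [Finset.mem_sigma, Finset.mem_erase] at hjl
    exact hjl.2.1 (congrArg Sigma.fst hswap)
  · rintro ⟨j, l⟩ hjl
    simp only [Finset.mem_sigma, Finset.mem_erase] at hjl ⊢
    exact ⟨hjl.2.2, hjl.2.1.symm, hjl.1⟩

lemma CubicalCochain.coboundary_coboundary (ω : CubicalCochain ι) (J : Finset ι) (v : ι →₀ ℕ) :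
    ω.coboundary.coboundary J v = 0 := by
  simp only [coboundary, ← Finset.sum_add_distrib]
  refine sum_sum_erase_eq_zero_of_symm CharTwo.add_self_eq_zero J fun j l => ?_
  rw [Finset.erase_right_comm, add_right_comm v]
  ring

variable {a : ι → (ι →₀ ℕ) → ZMod 2} {l : List ι} {J : Finset ι} {v : ι →₀ ℕ} {i : ι} {N : ℕ}

lemma coboundary_coboundaryProduct (a : ι → (ι →₀ ℕ) → ZMod 2) (l : List ι) (J : Finset ι)
    (v : ι →₀ ℕ) : (coboundaryProduct a l).coboundary J v = 0 := by
  cases l with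
  | nil => exact Finset.sum_eq_zero fun _ _ => CharTwo.add_self_eq_zero 1
  | cons i l => exact CubicalCochain.coboundary_coboundary _ J v

lemma coboundaryProduct_eq_zero_of_const {c : ZMod 2} (hi : i ∈ l)
    (hc : ∀ w ∈ gridCell J v, a i w = c) : coboundaryProduct a l J v = 0 := by
  induction l generalizing J v with
  | nil => cases hi
  | cons k l ih =>
    rcases List.mem_cons.1 hi with rfl | hil
    · calc coboundaryProduct a (i :: l) J v = c * (coboundaryProduct a l).coboundary J v := by
            simp only [coboundaryProduct, CubicalCochain.coboundary, Finset.mul_sum, mul_add]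
            refine Finset.sum_congr rfl fun j hj => ?_
            rw [hc v (left_mem_Icc.2 le_self_add), hc (v + Finsupp.single j 1)
              (gridCell_erase_add_single_subset hj v (left_mem_Icc.2 le_self_add))]
        _ = 0 := by rw [coboundary_coboundaryProduct, mul_zero]
    · refine Finset.sum_eq_zero fun j hj => ?_
      simp only [ih hil fun w hw => hc w (gridCell_erase_add_single_subset hj v hw),
        ih hil fun w hw => hc w (gridCell_erase_subset J v j hw), mul_zero, add_zero]

lemma coboundaryProduct_eq_zero_of_const_on_hyperplane {c : ZMod 2} (hi : i ∈ l) (hiJ : i ∉ J)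
    (hc : ∀ w : ι →₀ ℕ, w i = v i → a i w = c) : coboundaryProduct a l J v = 0 :=
  coboundaryProduct_eq_zero_of_const hi fun w hw => hc w (apply_eq_of_mem_gridCell hw hiJ)

-- Combinatorial Stokes: every face of the box contributes zero except the face `v i = 0` of the
-- head `i` of the list, on which `a i = 1`.
lemma sum_gridBox_coboundaryProduct (hN : 0 < N) (hl : l.Nodup)
    (h_zero : ∀ i ∈ l, ∀ v, v i = 0 → a i v = 1) (h_top : ∀ i ∈ l, ∀ v, v i = N → a i v = 0) :
    ∑ v ∈ gridBox N l.toFinset, coboundaryProduct a l l.toFinset v = 1 := by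
  induction l with
  | nil => simp [coboundaryProduct, gridBox, Finset.finsupp]
  | cons i l ih =>
    obtain ⟨hil, hl⟩ := List.nodup_cons.1 hl
    rw [List.forall_mem_cons] at h_zero h_top
    set J := (i :: l).toFinset with hJ
    have hJi : J.erase i = l.toFinset := by
      rw [hJ, List.toFinset_cons, Finset.erase_insert (by simpa using hil)]
    calc ∑ v ∈ gridBox N J, coboundaryProduct a (i :: l) J v
        = ∑ j ∈ J, ∑ v ∈ gridBox N (J.erase j), a i v * coboundaryProduct a l (J.erase j) v := by
          simp only [coboundaryProduct, CubicalCochain.coboundary]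
          rw [Finset.sum_comm]
          refine Finset.sum_congr rfl fun j hj => sum_gridBox_add_single_add
            (g := fun v => a i v * coboundaryProduct a l (J.erase j) v) hN hj fun v hv => ?_
          rcases List.mem_cons.1 (List.mem_toFinset.1 hj) with rfl | hjl
          · simp only [h_top.1 v hv, zero_mul]
          · rw [coboundaryProduct_eq_zero_of_const_on_hyperplane hjl (J.notMem_erase j)
              fun w hw => h_top.2 j hjl w (hw.trans hv), mul_zero]
      _ = ∑ v ∈ gridBox N (J.erase i), a i v * coboundaryProduct a l (J.erase i) v := by
          refine Finset.sum_eq_single i (fun j hj hji => Finset.sum_eq_zero fun v hv => ?_)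
            fun hi => absurd (by simp [hJ]) hi
          have hjl : j ∈ l := (List.mem_cons.1 (List.mem_toFinset.1 hj)).resolve_left hji
          have hvj : v j = 0 := (mem_gridBox.1 hv).2 j (J.notMem_erase j)
          rw [coboundaryProduct_eq_zero_of_const_on_hyperplane hjl (J.notMem_erase j)
            fun w hw => h_zero.2 j hjl w (hw.trans hvj), mul_zero]
      _ = ∑ v ∈ gridBox N l.toFinset, coboundaryProduct a l l.toFinset v := by
          rw [hJi]
          refine Finset.sum_congr rfl fun v hv => ?_
          rw [h_zero.1 v ((mem_gridBox.1 hv).2 i (by simpa using hil)), one_mul]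
      _ = 1 := ih hl h_zero.2 h_top.2

theorem exists_gridCell_inter_nonempty_and_diff_nonempty {ι : Type*} {N : ℕ}
    (s : Finset ι) (hN : 0 < N) {P : ι → Set (ι →₀ ℕ)}
    (h_zero : ∀ i ∈ s, ∀ v : ι →₀ ℕ, v i = 0 → v ∈ P i)
    (h_top : ∀ i ∈ s, ∀ v : ι →₀ ℕ, v i = N → v ∉ P i) :
    ∃ v, ∀ i ∈ s, (gridCell s v ∩ P i).Nonempty ∧ (gridCell s v \ P i).Nonempty := by
  classical
  set a : ι → (ι →₀ ℕ) → ZMod 2 := fun i => (P i).indicator 1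
  have sum_eq_one := sum_gridBox_coboundaryProduct (a := a) hN s.nodup_toList
    (fun i hi v hv => indicator_of_mem (h_zero i (Finset.mem_toList.1 hi) v hv) 1)
    (fun i hi v hv => indicator_of_notMem (h_top i (Finset.mem_toList.1 hi) v hv) 1)
  obtain ⟨v, -, hv⟩ := Finset.exists_ne_zero_of_sum_ne_zero (sum_eq_one.trans_ne one_ne_zero)
  rw [Finset.toList_toFinset] at hv
  refine ⟨v, fun i hi => ⟨?_, ?_⟩⟩ <;> by_contra hempty
  · refine hv (coboundaryProduct_eq_zero_of_const (c := 0) (Finset.mem_toList.2 hi) fun w hw => ?_)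
    exact indicator_of_notMem (fun hwP => hempty ⟨w, hw, hwP⟩) 1
  · refine hv (coboundaryProduct_eq_zero_of_const (c := 1) (Finset.mem_toList.2 hi) fun w hw => ?_)
    exact indicator_of_mem (not_not.1 fun hwP => hempty ⟨w, hw, hwP⟩) 1

end CubicalCochain

section Separator

variable {X Y Γ : Type*} [TopologicalSpace X] [TopologicalSpace Y] {A B L : Set X}

lemma IsSeparator.mono {A' B' : Set X} (hL : IsSeparator A B L) (hA : A' ⊆ A) (hB : B' ⊆ B) :
    IsSeparator A' B' L := by
  obtain ⟨hLc, U, V, hU, hV, hUV, hAU, hBV, hLUV⟩ := hL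
  exact ⟨hLc, U, V, hU, hV, hUV, hA.trans hAU, hB.trans hBV, hLUV⟩

lemma IsSeparator.preimage {f : Y → X} (hL : IsSeparator A B L) (hf : Continuous f) :
    IsSeparator (f ⁻¹' A) (f ⁻¹' B) (f ⁻¹' L) := by
  obtain ⟨hLc, U, V, hU, hV, hUV, hAU, hBV, hLUV⟩ := hL
  exact ⟨hLc.preimage hf, f ⁻¹' U, f ⁻¹' V, hU.preimage hf, hV.preimage hf, hUV.preimage f,
    preimage_mono hAU, preimage_mono hBV, by rw [← preimage_compl, hLUV, preimage_union]⟩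

lemma isSeparator_compl_union {U V : Set X} (hU : IsOpen U) (hV : IsOpen V) (hUV : Disjoint U V)
    (hA : A ⊆ U) (hB : B ⊆ V) : IsSeparator A B (U ∪ V)ᶜ :=
  ⟨(hU.union hV).isClosed_compl, U, V, hU, hV, hUV, hA, hB, compl_compl _⟩

lemma disjoint_closure_image_val_union {T : Set X} {U V : Set T} {B W₁ W₂ : Set X}
    (hV : IsOpen V) (hUV : Disjoint U V) (hBV : Subtype.val ⁻¹' B ⊆ V) (hW₁ : IsClosed W₁)
    (hWB : W₂ ⊆ interior B) (hW : Disjoint W₁ W₂) (hWV : Disjoint W₁ (Subtype.val '' V)) :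
    Disjoint (closure (Subtype.val '' U ∪ W₁)) (Subtype.val '' V ∪ W₂) := by
  obtain ⟨O, hO, rfl⟩ := isOpen_induced_iff.1 hV
  have hUO : Disjoint (Subtype.val '' U) (O ∪ interior B) := by
    rw [disjoint_left]
    rintro _ ⟨u, hu, rfl⟩ (huO | huB)
    · exact disjoint_left.1 hUV hu huO
    · exact disjoint_left.1 hUV hu (hBV (interior_subset (s := B) huB))
  rw [closure_union, hW₁.closure_eq, disjoint_union_left]
  refine ⟨(hUO.closure_left (hO.union isOpen_interior)).mono_right ?_,
    disjoint_union_right.2 ⟨hWV, hW⟩⟩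
  exact union_subset_union (image_preimage_subset _ _) hWB

lemma disjoint_image_val_of_subset_interior {T A W : Set X} {U V : Set T} (hUV : Disjoint U V)
    (hAU : Subtype.val ⁻¹' A ⊆ U) (hW : W ⊆ interior A) : Disjoint W (Subtype.val '' V) := by
  rw [disjoint_right]
  rintro _ ⟨t, ht, rfl⟩ htW
  exact disjoint_left.1 hUV (hAU (interior_subset (s := A) (hW htW))) ht

theorem IsSeparator.exists_extension [CompletelyNormalSpace X] {T W₁ W₂ : Set X} {L : Set T}
    (hL : IsSeparator (Subtype.val ⁻¹' A) (Subtype.val ⁻¹' B) L) (hW₁ : IsClosed W₁)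
    (hW₂ : IsClosed W₂) (hW : Disjoint W₁ W₂) (hA : W₁ ⊆ interior A) (hB : W₂ ⊆ interior B) :
    ∃ L' : Set X, IsSeparator W₁ W₂ L' ∧ Subtype.val ⁻¹' L' ⊆ L := by
  obtain ⟨-, U, V, hU, hV, hUV, hAU, hBV, hLUV⟩ := hL
  have separated := completely_normal
    (disjoint_closure_image_val_union hV hUV hBV hW₁ hB hW
      (disjoint_image_val_of_subset_interior hUV hAU hA))
    (disjoint_closure_image_val_union hU hUV.symm hAU hW₂ hA hW.symm
      (disjoint_image_val_of_subset_interior hUV.symm hBV hB)).symm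
  obtain ⟨U', V', hU', hV', hUU', hVV', hUV'⟩ := separatedNhds_iff_disjoint.2 separated
  refine ⟨(U' ∪ V')ᶜ, isSeparator_compl_union hU' hV' hUV' (subset_union_right.trans hUU')
    (subset_union_right.trans hVV'), fun t ht => not_not.1 fun htL => ?_⟩
  rcases hLUV.subset htL with htU | htV
  · exact ht (.inl (hUU' (.inl ⟨t, htU, rfl⟩)))
  · exact ht (.inr (hVV' (.inl ⟨t, htV, rfl⟩)))

lemma exists_isClopen_of_connectedComponent_ne [CompactSpace X] [T2Space X] (hA : IsClosed A)
    (hB : IsClosed B) (hAB : ∀ a ∈ A, ∀ b ∈ B, connectedComponent a ≠ connectedComponent b) :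
    ∃ D : Set X, IsClopen D ∧ A ⊆ D ∧ Disjoint B D := by
  have continuous_mk : Continuous (ConnectedComponents.mk : X → _) :=
    ConnectedComponents.continuous_coe
  have isClosed_image {F : Set X} (hF : IsClosed F) : IsClosed (ConnectedComponents.mk '' F) :=
    (hF.isCompact.image continuous_mk).isClosed
  have image_subset : ConnectedComponents.mk '' A ⊆ (ConnectedComponents.mk '' B)ᶜ := by
    rintro _ ⟨a, ha, rfl⟩ ⟨b, hb, hba⟩
    exact hAB a ha b hb (ConnectedComponents.coe_eq_coe.1 hba).symm
  obtain ⟨D, hD, hAD, hDB⟩ := exists_clopen_of_closed_subset_open (isClosed_image hA)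
    (isClosed_image hB).isOpen_compl image_subset
  exact ⟨_, hD.preimage continuous_mk, image_subset_iff.1 hAD,
    disjoint_left.2 fun b hb hbD => hDB hbD ⟨b, hb, rfl⟩⟩

lemma exists_isClosed_partition_of_no_continuum [CompactSpace X] [T2Space X] {K : Set X}
    (hK : IsClosed K) (hA : IsClosed A) (hB : IsClosed B)
    (hC : ∀ C ⊆ K, IsCompact C → IsConnected C → (C ∩ A).Nonempty → ¬(C ∩ B).Nonempty) :
    ∃ D E : Set X, IsClosed D ∧ IsClosed E ∧ Disjoint D E ∧ D ∪ E = K ∧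
      Disjoint D B ∧ Disjoint A E := by
  have : CompactSpace K := isCompact_iff_compactSpace.1 hK.isCompact
  obtain ⟨D, hD, hAD, hDB⟩ := exists_isClopen_of_connectedComponent_ne
    (hA.preimage (continuous_subtype_val (p := (· ∈ K)))) (hB.preimage continuous_subtype_val)
    fun a ha b hb hab => hC (Subtype.val '' connectedComponent a) (Subtype.coe_image_subset K _)
      (isClosed_connectedComponent.isCompact.image continuous_subtype_val)
      (isConnected_connectedComponent.image _ continuous_subtype_val.continuousOn)
      ⟨a, ⟨a, mem_connectedComponent, rfl⟩, ha⟩ ⟨b, ⟨b, hab ▸ mem_connectedComponent, rfl⟩, hb⟩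
  refine ⟨Subtype.val '' D, Subtype.val '' Dᶜ, hK.isClosedEmbedding_subtypeVal.isClosedMap _ hD.1,
    hK.isClosedEmbedding_subtypeVal.isClosedMap _ hD.compl.1,
    (disjoint_image_iff Subtype.val_injective).2 disjoint_compl_right, ?_, ?_, ?_⟩
  · rw [← image_union, union_compl_self, image_univ, Subtype.range_coe]
  · rw [disjoint_left]
    rintro _ ⟨d, hd, rfl⟩ hdB
    exact disjoint_left.1 hDB hdB hd
  · rw [disjoint_right]
    rintro _ ⟨e, he, rfl⟩ heA
    exact he (hAD heA)

lemma exists_isSeparator_disjoint_of_no_continuum [CompactSpace X] [T2Space X] {K : Set X}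
    (hK : IsClosed K) (hA : IsClosed A) (hB : IsClosed B) (hAB : Disjoint A B)
    (hC : ∀ C ⊆ K, IsCompact C → IsConnected C → (C ∩ A).Nonempty → ¬(C ∩ B).Nonempty) :
    ∃ L : Set X, IsSeparator A B L ∧ Disjoint L K := by
  obtain ⟨D, E, hD, hE, hDE, rfl, hDB, hAE⟩ :=
    exists_isClosed_partition_of_no_continuum hK hA hB hC
  obtain ⟨U, V, hU, hV, hDU, hEV, hUV⟩ := normal_separation (hD.union hA) (hE.union hB)
    (disjoint_union_left.2
      ⟨disjoint_union_right.2 ⟨hDE, hDB⟩, disjoint_union_right.2 ⟨hAE, hAB⟩⟩)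
  exact ⟨(U ∪ V)ᶜ, isSeparator_compl_union hU hV hUV (subset_union_right.trans hDU)
    (subset_union_right.trans hEV), disjoint_compl_left_iff_subset.2 (union_subset_union
      (subset_union_left.trans hDU) (subset_union_left.trans hEV))⟩

theorem IsEssentialFamily.exists_continuum [CompactSpace X] [T2Space X] {A B : Γ → Set X}
    (hAB : IsEssentialFamily A B) {k : Γ} (hA : IsClosed (A k)) (hB : IsClosed (B k))
    (hk : Disjoint (A k) (B k)) {L : {i // i ≠ k} → Set X}
    (hL : ∀ i : {i // i ≠ k}, IsSeparator (A i) (B i) (L i)) :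
    ∃ C ⊆ ⋂ i, L i, IsCompact C ∧ IsConnected C ∧ (C ∩ A k).Nonempty ∧ (C ∩ B k).Nonempty := by
  classical
  by_contra! no_continuum
  obtain ⟨Lk, hLk, hLkL⟩ := exists_isSeparator_disjoint_of_no_continuum
    (isClosed_iInter fun i => (hL i).1) hA hB hk
    fun C hCL hC hC' hCA => not_nonempty_iff_eq_empty.2 (no_continuum C hCL hC hC' hCA)
  obtain ⟨p, hp⟩ := hAB (fun i => if h : i = k then Lk else L ⟨i, h⟩) fun i => by
    split_ifs with h
    · exact h ▸ hLk
    · exact hL ⟨i, h⟩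
  rw [mem_iInter] at hp
  exact disjoint_left.1 hLkL (by simpa using hp k)
    (mem_iInter.2 fun i => by simpa [i.2] using hp i)

lemma IsEssentialFamily.stronglyInfiniteDimensional [Countable Γ] [Infinite Γ] {A B : Γ → Set X}
    (hAB : IsEssentialFamily A B)
    (hclosed : ∀ i, IsClosed (A i) ∧ IsClosed (B i) ∧ Disjoint (A i) (B i)) :
    StronglyInfiniteDimensional X := by
  obtain ⟨e⟩ := nonempty_equiv_of_countable (α := ℕ) (β := Γ)
  refine ⟨A ∘ e, B ∘ e, fun n => hclosed (e n), fun L hL => ?_⟩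
  have hmeet := hAB (L ∘ e.symm) fun i => by simpa using hL (e.symm i)
  simp only [Function.comp_apply] at hmeet
  rwa [e.symm.surjective.iInter_comp] at hmeet

theorem isEssentialFamily_preimage_image [CompactSpace X] [T5Space X]
    {A B A' B' : Γ → Set X} (hAB : IsEssentialFamily A B)
    (hclosed : ∀ i, IsClosed (A i) ∧ IsClosed (B i) ∧ Disjoint (A i) (B i))
    (hA : ∀ i, A i ⊆ interior (A' i)) (hB : ∀ i, B i ⊆ interior (B' i))
    {f : X → Y} (hf : Continuous f) {S : Set Y} {k : Γ}
    (hmeet : ∀ C, IsCompact C → IsConnected C → (C ∩ A k).Nonempty → (C ∩ B k).Nonempty →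
      (S ∩ f '' C).Nonempty) :
    IsEssentialFamily (fun i : {i // i ≠ k} => ((↑) : S → Y) ⁻¹' (f '' A' i))
      fun i => (↑) ⁻¹' (f '' B' i) := by
  intro L hL
  have exists_extension (i : {i // i ≠ k}) : ∃ L' : Set X, IsSeparator (A i) (B i) L' ∧
      Subtype.val ⁻¹' L' ⊆ S.restrictPreimage f ⁻¹' L i :=
    (((hL i).preimage hf.restrictPreimage).mono (fun z hz => mem_image_of_mem f hz)
      fun z hz => mem_image_of_mem f hz).exists_extension
        (hclosed i).1 (hclosed i).2.1 (hclosed i).2.2 (hA i) (hB i)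
  choose L' hL' hL'L using exists_extension
  obtain ⟨C, hCL', hC, hC', hCA, hCB⟩ :=
    hAB.exists_continuum (hclosed k).1 (hclosed k).2.1 (hclosed k).2.2 hL'
  obtain ⟨_, hzS, z, hzC, rfl⟩ := hmeet C hC hC' hCA hCB
  exact ⟨⟨f z, hzS⟩, mem_iInter.2 fun i =>
    hL'L i (show (⟨z, hzS⟩ : f ⁻¹' S) ∈ _ from mem_iInter.1 (hCL' hzC) i)⟩

end Separator

section HilbertCube

open Filter Topology Uniformity

lemma isClosed_negFace (i : ℕ) : IsClosed (negFace i) :=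
  isClosed_eq (by fun_prop) continuous_const

lemma isClosed_posFace (i : ℕ) : IsClosed (posFace i) :=
  isClosed_eq (by fun_prop) continuous_const

lemma disjoint_negFace_posFace (i : ℕ) : Disjoint (negFace i) (posFace i) := by
  refine disjoint_left.2 fun z (hneg : (z i : ℝ) = -1) (hpos : (z i : ℝ) = 1) => ?_
  linarith

/-- The grid vertex `v` placed in the Hilbert cube so that the grid `[0, N]^ℕ` fills the cube;
coordinates beyond `N` are clamped. -/
noncomputable def gridPoint (N : ℕ) (v : ℕ →₀ ℕ) : HilbertCube := fun j =>
  projIcc (-1) 1 (by norm_num) (-1 + 2 * v j / N)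

lemma gridPoint_mem_negFace {N i : ℕ} {v : ℕ →₀ ℕ} (hv : v i = 0) : gridPoint N v ∈ negFace i := by
  simp [negFace, gridPoint, hv]

lemma gridPoint_mem_posFace {N i : ℕ} {v : ℕ →₀ ℕ} (hN : 0 < N) (hv : v i = N) :
    gridPoint N v ∈ posFace i := by
  have hcoord : (-1 + 2 * (N : ℝ) / N) = 1 := by field_simp; norm_num
  simp [posFace, gridPoint, hv, hcoord]

lemma dist_gridPoint_le {N : ℕ} {J : Finset ℕ} {v w : ℕ →₀ ℕ} (hw : w ∈ gridCell J v) (j : ℕ) :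
    dist (gridPoint N v j) (gridPoint N w j) ≤ 2 / N := by
  have hle : (v j : ℝ) ≤ w j := by exact_mod_cast hw.1 j
  have hlt : (w j : ℝ) ≤ v j + 1 := by exact_mod_cast apply_le_add_one_of_mem_gridCell hw j
  rw [dist_comm]
  calc |(gridPoint N w j : ℝ) - gridPoint N v j|
      ≤ |(-1 + 2 * (w j : ℝ) / N) - (-1 + 2 * v j / N)| := abs_projIcc_sub_projIcc _
    _ = (w j - v j) * (2 / N) := by
        rw [← abs_of_nonneg (mul_nonneg (sub_nonneg.2 hle) (by positivity : (0 : ℝ) ≤ 2 / N))]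
        ring_nf
    _ ≤ 2 / N := mul_le_of_le_one_left (by positivity) (by linarith)

lemma tendsto_gridPoint_uniformity {l : Filter ℕ} (hl : l ≤ atTop) {J : ℕ → Finset ℕ}
    {v w : ℕ → ℕ →₀ ℕ} (hw : ∀ᶠ n in l, w n ∈ gridCell (J n) (v n)) :
    Tendsto (fun n => (gridPoint (n + 1) (v n), gridPoint (n + 1) (w n))) l (𝓤 HilbertCube) := by
  have mesh_tendsto : Tendsto (fun n : ℕ => 2 / ((n + 1 : ℕ) : ℝ)) l (𝓝 0) :=
    ((tendsto_const_div_atTop_nhds_zero_nat 2).comp (tendsto_add_atTop_nat 1)).mono_left hl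
  rw [Pi.uniformity, tendsto_iInf]
  refine fun j => tendsto_comap_iff.2 (tendsto_uniformity_iff_dist_tendsto_zero.2 ?_)
  exact squeeze_zero' (.of_forall fun _ => dist_nonneg)
    (hw.mono fun n hn => dist_gridPoint_le hn j) mesh_tendsto

lemma mem_closure_of_tendsto_gridPoint {l : Filter ℕ} [l.NeBot] (hl : l ≤ atTop)
    {J : ℕ → Finset ℕ} {v : ℕ → ℕ →₀ ℕ} {p : HilbertCube} {T : Set HilbertCube}
    (hp : Tendsto (fun n => gridPoint (n + 1) (v n)) l (𝓝 p))
    (hT : ∀ᶠ n in l, (gridCell (J n) (v n) ∩ gridPoint (n + 1) ⁻¹' T).Nonempty) :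
    p ∈ closure T := by
  obtain ⟨w, hw⟩ := hT.choice
  exact mem_closure_of_tendsto
    (hp.congr_uniformity (tendsto_gridPoint_uniformity hl (hw.mono fun n hn => hn.1)))
    (hw.mono fun n hn => hn.2)

theorem isEssentialFamily_negFace_posFace : IsEssentialFamily negFace posFace := by
  intro L hL
  choose U V hU hV hUV hnegU hposV hLUV using fun i => (hL i).2
  choose v hv using fun n : ℕ => exists_gridCell_inter_nonempty_and_diff_nonempty (Finset.range n)
    n.succ_pos (P := fun i => gridPoint (n + 1) ⁻¹' U i)
    (fun i _ v hv => hnegU i (gridPoint_mem_negFace hv))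
    (fun i _ v hv => disjoint_right.1 (hUV i) (hposV i (gridPoint_mem_posFace n.succ_pos hv)))
  obtain ⟨p, hp⟩ : ∃ p, Tendsto (fun n => gridPoint (n + 1) (v n)) (hyperfilter ℕ) (𝓝 p) :=
    ⟨_, ((hyperfilter ℕ).map fun n => gridPoint (n + 1) (v n)).le_nhds_lim⟩
  refine ⟨p, mem_iInter.2 fun i => not_not.1 fun hpL => ?_⟩
  have hi : ∀ᶠ n in hyperfilter ℕ, i ∈ Finset.range n :=
    ((eventually_gt_atTop i).filter_mono Nat.hyperfilter_le_atTop).mono fun n => Finset.mem_range.2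
  rcases (hLUV i).subset hpL with hpU | hpV
  · have hpU' : p ∈ closure (U i)ᶜ := mem_closure_of_tendsto_gridPoint Nat.hyperfilter_le_atTop hp
      (hi.mono fun n hn => (hv n i hn).2)
    exact (hU i).isClosed_compl.closure_eq.subset hpU' hpU
  · have hpU' : p ∈ closure (U i) := mem_closure_of_tendsto_gridPoint Nat.hyperfilter_le_atTop hp
      (hi.mono fun n hn => (hv n i hn).1)
    exact disjoint_left.1 ((hUV i).closure_left (hV i)) hpU' hpV

lemma negFace_subset_interior (i : ℕ) :
    negFace i ⊆ interior {z : HilbertCube | (z i : ℝ) ≤ -(1 / 2)} := by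
  have hopen : IsOpen {z : HilbertCube | (z i : ℝ) < -(1 / 2)} :=
    isOpen_lt (by fun_prop) continuous_const
  refine Subset.trans (fun z (hz : (z i : ℝ) = -1) => ?_)
    (hopen.subset_interior_iff.2 (ofPred_subset_ofPred.2 fun _ => le_of_lt))
  rw [mem_ofPred_eq, hz]
  norm_num

lemma posFace_subset_interior (i : ℕ) :
    posFace i ⊆ interior {z : HilbertCube | (1 / 2 : ℝ) ≤ z i} := by
  have hopen : IsOpen {z : HilbertCube | (1 / 2 : ℝ) < z i} :=
    isOpen_lt continuous_const (by fun_prop)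
  refine Subset.trans (fun z (hz : (z i : ℝ) = 1) => ?_)
    (hopen.subset_interior_iff.2 (ofPred_subset_ofPred.2 fun _ => le_of_lt))
  rw [mem_ofPred_eq, hz]
  norm_num

theorem stronglyInfiniteDimensional_of_meets_image {Y : Type*} [TopologicalSpace Y] [T2Space Y]
    {f : HilbertCube → Y} (hf : Continuous f) {S : Set Y} {k : ℕ}
    (hinj : ∀ z w, f z ∈ S → f z = f w → ∀ i ≠ k, z i = w i)
    (hmeet : ∀ C, IsCompact C → IsConnected C → (C ∩ negFace k).Nonempty →
      (C ∩ posFace k).Nonempty → (S ∩ f '' C).Nonempty) :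
    StronglyInfiniteDimensional S := by
  have : Infinite {i // i ≠ k} := (finite_singleton k).infinite_compl.to_subtype
  refine (isEssentialFamily_preimage_image isEssentialFamily_negFace_posFace
    (fun i => ⟨isClosed_negFace i, isClosed_posFace i, disjoint_negFace_posFace i⟩)
    negFace_subset_interior posFace_subset_interior hf hmeet).stronglyInfiniteDimensional
    fun i => ⟨?_, ?_, ?_⟩
  · exact ((isClosed_le (by fun_prop) continuous_const).isCompact.image hf).isClosed.preimage
      continuous_subtype_val
  · exact ((isClosed_le continuous_const (by fun_prop)).isCompact.image hf).isClosed.preimage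
      continuous_subtype_val
  · rw [disjoint_left]
    rintro ⟨s, hs⟩ ⟨z, hz, rfl⟩ ⟨w, hw, hwz⟩
    simp only [mem_ofPred_eq, ← hinj z w hs hwz.symm i i.2] at hz hw
    linarith

/-- The coordinate `z k ∈ [-1, 1]` rescaled to `[0, 1]`. -/
noncomputable def height (k : ℕ) (z : HilbertCube) : ℝ := (1 + z k) / 2

lemma height_mem_Icc (k : ℕ) (z : HilbertCube) : height k z ∈ Icc (0 : ℝ) 1 := by
  obtain ⟨hlow, hhigh⟩ := (z k).2
  constructor <;> unfold height <;> linarith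

lemma height_eq_zero_iff {k : ℕ} {z : HilbertCube} : height k z = 0 ↔ z ∈ negFace k := by
  rw [height, negFace, mem_ofPred_eq]
  constructor <;> intro h <;> linarith

lemma height_eq_one_iff {k : ℕ} {z : HilbertCube} : height k z = 1 ↔ z ∈ posFace k := by
  rw [height, posFace, mem_ofPred_eq]
  constructor <;> intro h <;> linarith

/-- The weight of the coordinate `z i` in `suspensionMap x y k z i`; it vanishes on the faces
`z k = ±1`, and for `i = k`. -/
noncomputable def suspensionWeight (k : ℕ) (z : HilbertCube) (i : ℕ) : ℝ :=
  if i = k then 0 else height k z * (1 - height k z)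

lemma suspensionWeight_mem_Icc (k : ℕ) (z : HilbertCube) (i : ℕ) :
    suspensionWeight k z i ∈ Icc (0 : ℝ) 1 := by
  obtain ⟨hlow, hhigh⟩ := height_mem_Icc k z
  unfold suspensionWeight
  split_ifs
  · simp
  · constructor <;> nlinarith

/-- The map of the Hilbert cube that collapses the faces `z k = -1` and `z k = 1` to `x` and `y`:
the slice at height `t` is shrunk towards the point at parameter `t` of the segment from `x`
to `y`. The coordinate `k` is not perturbed, so that it determines the height if `x k ≠ y k`. -/
noncomputable def suspensionMap (x y : HilbertCube) (k : ℕ) (z : HilbertCube) : HilbertCube :=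
  fun i => ⟨AffineMap.lineMap (AffineMap.lineMap (x i : ℝ) (y i : ℝ) (height k z)) (z i : ℝ)
      (suspensionWeight k z i),
    (convex_Icc _ _).lineMap_mem ((convex_Icc _ _).lineMap_mem (x i).2 (y i).2
      (height_mem_Icc k z)) (z i).2 (suspensionWeight_mem_Icc k z i)⟩

variable {x y z w : HilbertCube} {k i : ℕ}

lemma continuous_suspensionMap (x y : HilbertCube) (k : ℕ) : Continuous (suspensionMap x y k) := by
  have continuous_height : Continuous (height k) := by unfold height; fun_prop
  refine continuous_pi fun i => Continuous.subtype_mk ?_ _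
  have continuous_weight : Continuous fun z => suspensionWeight k z i := by
    unfold suspensionWeight
    split_ifs <;> fun_prop
  simp only [AffineMap.lineMap_apply_module']
  fun_prop

lemma suspensionMap_of_mem_negFace (hz : z ∈ negFace k) : suspensionMap x y k z = x := by
  ext i
  simp [suspensionMap, suspensionWeight, height_eq_zero_iff.2 hz]

lemma suspensionMap_of_mem_posFace (hz : z ∈ posFace k) : suspensionMap x y k z = y := by
  ext i
  simp [suspensionMap, suspensionWeight, height_eq_one_iff.2 hz]

lemma height_eq_of_suspensionMap_eq (hk : x k ≠ y k)
    (hzw : suspensionMap x y k z = suspensionMap x y k w) : height k z = height k w := by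
  have hcoord := congrArg Subtype.val (congrFun hzw k)
  simp only [suspensionMap, suspensionWeight, if_true, AffineMap.lineMap_apply_zero] at hcoord
  exact AffineMap.lineMap_injective ℝ (Subtype.coe_injective.ne hk) hcoord

lemma apply_eq_of_suspensionMap_eq (hk : x k ≠ y k) (hneg : z ∉ negFace k) (hpos : z ∉ posFace k)
    (hzw : suspensionMap x y k z = suspensionMap x y k w) (hi : i ≠ k) : z i = w i := by
  have hcoord := congrArg Subtype.val (congrFun hzw i)
  have weight_ne_zero : height k z * (1 - height k z) ≠ 0 :=
    mul_ne_zero (mt height_eq_zero_iff.1 hneg)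
      (sub_ne_zero.2 (mt (height_eq_one_iff.1 ·.symm) hpos))
  simp only [suspensionMap, suspensionWeight, if_neg hi, ← height_eq_of_suspensionMap_eq hk hzw,
    AffineMap.lineMap_apply_module] at hcoord
  exact Subtype.ext (mul_left_cancel₀ weight_ne_zero (add_left_cancel hcoord))

end HilbertCube

/-- If `x ≠ y` are points of the Hilbert cube outside `S ⊆ Q` and `S`
intersects every continuum containing both `x` and `y`, then `S` is strongly
infinite dimensional. -/
theorem stronglyInfiniteDimensional_of_meets_every_continuum_between_points
    (x y : HilbertCube) (hxy : x ≠ y) (S : Set HilbertCube)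
    (hx : x ∉ S) (hy : y ∉ S)
    (hS : ∀ C : Set HilbertCube, IsCompact C → IsConnected C →
      x ∈ C → y ∈ C → (S ∩ C).Nonempty) :
    StronglyInfiniteDimensional S := by
  obtain ⟨k, hk⟩ := Function.ne_iff.1 hxy
  refine stronglyInfiniteDimensional_of_meets_image (continuous_suspensionMap x y k) (k := k) ?_ ?_
  · intro z w hzS hzw i hi
    have hneg : z ∉ negFace k := fun hz =>
      hx (suspensionMap_of_mem_negFace (x := x) (y := y) hz ▸ hzS)
    have hpos : z ∉ posFace k := fun hz =>
      hy (suspensionMap_of_mem_posFace (x := x) (y := y) hz ▸ hzS)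
    exact apply_eq_of_suspensionMap_eq hk hneg hpos hzw hi
  · rintro C hC hC' ⟨a, haC, ha⟩ ⟨b, hbC, hb⟩
    have hf := continuous_suspensionMap x y k
    exact hS _ (hC.image hf) (hC'.image _ hf.continuousOn)
      ⟨a, haC, suspensionMap_of_mem_negFace ha⟩ ⟨b, hbC, suspensionMap_of_mem_posFace hb⟩
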